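/- Suppose there exists a connected simple graph on Fin N admitting a completely degenerate equilibrium of the identical Kuramoto system. Then there exists a connected simple graph on Fin (N+3) admitting a completely degenerate equilibrium of the identical Kuramoto system. -/

import Mathlib

open Real

open Classical in
/-- Adjacency indicator: `1` if `j` and `k` are adjacent in `G`, `0` otherwise. -/
noncomputable def adjInd {V : Type*} (G : SimpleGraph V) (j k : V) : ℝ :=
  if G.Adj j k then 1 else 0

/-- A completely degenerate equilibrium of the identical Kuramoto system on `G`. -/
def IsCDE {V : Type*} [Fintype V] (G : SimpleGraph V) (θ : V → ℝ) : Prop :=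
  (∀ k, ∑ j, adjInd G j k * Real.sin (θ j - θ k) = 0) ∧
  (∀ j k, G.Adj j k → Real.cos (θ j - θ k) = 0)

def extAdj {V : Type*} (G : SimpleGraph V) (v : V) : V ⊕ Fin 3 → V ⊕ Fin 3 → Prop
  | .inl i, .inl j => G.Adj i j
  | .inl i, .inr x => i = v ∧ x ≠ 1
  | .inr x, .inl i => i = v ∧ x ≠ 1
  | .inr x, .inr y => x ≠ y ∧ (x = 1 ∨ y = 1)

def extG {V : Type*} (G : SimpleGraph V) (v : V) : SimpleGraph (V ⊕ Fin 3) where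
  Adj := extAdj G v
  symm := ⟨by
    rintro (i | x) (j | y) h
    · exact SimpleGraph.Adj.symm (G := G) h
    · exact h
    · exact h
    · exact ⟨h.1.symm, h.2.symm⟩⟩
  loopless := ⟨by
    rintro (i | x) h
    · exact G.loopless.irrefl i h
    · exact h.1 rfl⟩

noncomputable def extT {V : Type*} (θ : V → ℝ) (v : V) : V ⊕ Fin 3 → ℝ
  | .inl i => θ i
  | .inr x => θ v + ((x : ℕ) + 1) * (π / 2)

theorem ext_conn {V : Type*} (G : SimpleGraph V) (v : V) (hG : G.Connected) :
    (extG G v).Connected := by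
  have key : ∀ w, (extG G v).Reachable (.inl v) w := by
    have h0 : (extG G v).Reachable (.inl v) (.inr 0) :=
      SimpleGraph.Adj.reachable (show extAdj G v (.inl v) (.inr 0) from ⟨rfl, by decide⟩)
    have h2 : (extG G v).Reachable (.inl v) (.inr 2) :=
      SimpleGraph.Adj.reachable (show extAdj G v (.inl v) (.inr 2) from ⟨rfl, by decide⟩)
    have h1 : (extG G v).Reachable (.inr 0) (.inr 1) :=
      SimpleGraph.Adj.reachable (show extAdj G v (.inr 0) (.inr 1) from ⟨by decide, Or.inr rfl⟩)
    rintro (i | x)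
    · let f : G →g extG G v := ⟨Sum.inl, fun {a b} h => h⟩
      exact (hG.preconnected v i).map f
    · fin_cases x
      · exact h0
      · exact h0.trans h1
      · exact h2
  have : Nonempty (V ⊕ Fin 3) := ⟨.inl v⟩
  exact ⟨fun a b => (key a).symm.trans (key b)⟩

theorem sin_a (t : ℝ) : sin (t + 3 * (π / 2)) = - cos t := by
  rw [show t + 3 * (π / 2) = (t + π / 2) + π by ring, sin_add_pi, sin_add_pi_div_two]

theorem cos_a (t : ℝ) : cos (t + 3 * (π / 2)) = sin t := by
  rw [show t + 3 * (π / 2) = (t + π / 2) + π by ring, cos_add_pi, cos_add_pi_div_two, neg_neg]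

theorem ext_cde {V : Type*} [Fintype V] (G : SimpleGraph V) (v : V) (θ : V → ℝ)
    (h : IsCDE G θ) : IsCDE (extG G v) (extT θ v) := by
  classical
  have c1 : cos (π / 2) = 0 := cos_pi_div_two
  have s1 : sin (π / 2) = 1 := sin_pi_div_two
  have c3 : cos (3 * (π / 2)) = 0 := by simpa using cos_a 0
  have s3 : sin (3 * (π / 2)) = -1 := by simpa using sin_a 0
  obtain ⟨hs, hc⟩ := h
  constructor
  · rintro (i | x)
    · rw [Fintype.sum_sum_type]
      have e : ∑ j, adjInd (extG G v) (.inl j) (.inl i) *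
          sin (extT θ v (.inl j) - extT θ v (.inl i)) = 0 := hs i
      rw [e, Fin.sum_univ_three]
      by_cases hi : i = v
      · subst hi
        simp only [adjInd, extG, extAdj, extT]
        norm_num [s1, s3, show (2 : Fin 3) ≠ 1 by decide]
      · simp [adjInd, extG, extAdj, hi]
    · rw [Fintype.sum_sum_type, Fin.sum_univ_three]
      have e : ∑ j, adjInd (extG G v) (.inl j) (.inr x) *
          sin (extT θ v (.inl j) - extT θ v (.inr x)) =
          if x ≠ 1 then sin (-(((x : ℕ) + 1) * (π / 2))) else 0 := by
        rw [Finset.sum_eq_single v]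
        · by_cases hx1 : x = 1 <;> simp [adjInd, extG, extAdj, extT, hx1]
        · intro b _ hb
          simp [adjInd, extG, extAdj, hb]
        · simp
      rw [e]
      fin_cases x
      · simp [adjInd, extG, extAdj, extT]
        rw [show (1 + 1) * (π / 2) - π / 2 = π / 2 by ring, s1]; ring
      · simp [adjInd, extG, extAdj, extT]
        rw [show π / 2 - (1 + 1) * (π / 2) = -(π / 2) by ring,
          show (2 + 1) * (π / 2) - (1 + 1) * (π / 2) = π / 2 by ring, sin_neg, s1]; ring
      · simp [adjInd, extG, extAdj, extT]
        rw [show (2 + 1) * (π / 2) = 3 * (π / 2) by ring,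
          show (1 + 1) * (π / 2) - 3 * (π / 2) = -(π / 2) by ring, sin_neg, s1, s3]; ring
  · have hx : ∀ x : Fin 3, x ≠ 1 → cos (((x : ℕ) + 1) * (π / 2)) = 0 := by
      intro x hx
      fin_cases x
      · norm_num
      · simp at hx
      · norm_num [c3]
    rintro (i | x) (j | y) hadj
    · exact hc i j hadj
    · obtain ⟨rfl, h1⟩ := hadj
      simp only [extT]
      rw [← cos_neg, neg_sub, add_sub_cancel_left]
      exact hx y h1
    · obtain ⟨rfl, h1⟩ := hadj
      simp only [extT]
      rw [add_sub_cancel_left]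
      exact hx x h1
    · have hadj' : x ≠ y ∧ (x = 1 ∨ y = 1) := hadj
      have : extT θ v (.inr x) - extT θ v (.inr y) = π / 2 ∨
          extT θ v (.inr x) - extT θ v (.inr y) = -(π / 2) := by
        fin_cases x <;> fin_cases y <;> simp [extT] at hadj' ⊢ <;>
          first | (ring; done) | (left; ring; done) | (right; ring; done)
      rcases this with h | h <;> rw [h]
      · exact c1
      · rw [cos_neg, c1]

/-- if some connected graph on `Fin N` admits a completely degenerate
equilibrium, then so does some connected graph on `Fin (N+3)`. -/
theorem stmt5 {N : ℕ}
    (h : ∃ G : SimpleGraph (Fin N), G.Connected ∧ ∃ θ : Fin N → ℝ, IsCDE G θ) :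
    ∃ G' : SimpleGraph (Fin (N + 3)), G'.Connected ∧ ∃ θ : Fin (N + 3) → ℝ, IsCDE G' θ := by
  obtain ⟨G, hG, θ, hθ⟩ := h
  obtain ⟨v⟩ := hG.nonempty
  let e : Fin (N + 3) ≃ Fin N ⊕ Fin 3 := finSumFinEquiv.symm
  obtain ⟨h1, h2⟩ := ext_cde G v θ hθ
  refine ⟨(extG G v).comap e, ?_, fun i => extT θ v (e i), ?_, ?_⟩
  · exact (SimpleGraph.Iso.connected_iff (SimpleGraph.Iso.comap e (extG G v))).2 (ext_conn G v hG)
  · intro k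
    rw [← h1 (e k), ← e.sum_comp]
    rfl
  · intro j k hjk
    exact h2 _ _ hjk
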